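/- Let M and N be weight sequences satisfying m_k^{1/k} → ∞ and n_k^{1/k} → ∞, where m_k := M_k/k! and n_k := N_k/k!, and suppose C := mg(M,N) < ∞. Then for all t > 0 and all j ∈ ℕ one has h_m(t) ≤ C^j·n_j·t^j·h_n(C·t), and for all t > 0 one has h_m(t) ≤ h_n(eC·t/2)^2. -/

import Mathlib

open Filter Set Asymptotics MeasureTheory

noncomputable section

/-- `M` is a weight sequence: `M 0 = 1`, positive, `M 1 ≥ 1`, log-convex and
`M k ^ (1/k) → ∞`. -/
def IsWeightSeq (M : ℕ → ℝ) : Prop :=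
  M 0 = 1 ∧ (∀ k, 0 < M k) ∧ 1 ≤ M 1 ∧
    (∀ k : ℕ, 1 ≤ k → M k ^ 2 ≤ M (k - 1) * M (k + 1)) ∧
    Tendsto (fun k : ℕ => M k ^ (1 / (k : ℝ))) atTop atTop

/-- The sequence `m k = M k / k!`. -/
def mseq (M : ℕ → ℝ) : ℕ → ℝ := fun k => M k / (Nat.factorial k : ℝ)

/-- Log-convexity of a sequence. -/
def LogConvexSeq (m : ℕ → ℝ) : Prop := ∀ k : ℕ, 1 ≤ k → m k ^ 2 ≤ m (k - 1) * m (k + 1)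

/-- `m k ^ (1/k) → ∞`. -/
def RootTendsToInfty (m : ℕ → ℝ) : Prop :=
  Tendsto (fun k : ℕ => m k ^ (1 / (k : ℝ))) atTop atTop

/-- Moderate growth of a sequence. -/
def ModerateGrowth (M : ℕ → ℝ) : Prop :=
  ∃ C : ℝ, 0 < C ∧ ∀ j k : ℕ, M (j + k) ≤ C ^ (j + k) * M j * M k

/-- Derivation closedness of a sequence. -/
def DerivClosed (M : ℕ → ℝ) : Prop :=
  ∃ C : ℝ, 0 < C ∧ ∀ k : ℕ, M (k + 1) ≤ C ^ (k + 1) * M k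

/-- Non-quasianalyticity: `∑_{k≥1} M (k-1) / M k = ∑_{k≥1} 1/μ_k < ∞`. -/
def NonQuasianalytic (M : ℕ → ℝ) : Prop := Summable fun k : ℕ => M k / M (k + 1)

/-- Quasianalyticity: `∑_{k≥1} 1/μ_k = ∞`. -/
def Quasianalytic (M : ℕ → ℝ) : Prop := ¬ NonQuasianalytic M

/-- The associated function `h_m (t) = inf_k m k * t ^ k`. -/
def hFun (m : ℕ → ℝ) (t : ℝ) : ℝ := ⨅ k : ℕ, m k * t ^ k

/-- `Γ̄_m (t) = min {k | h_m t = m k * t ^ k}`. -/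
def GammaBar (m : ℕ → ℝ) (t : ℝ) : ℕ := sInf {k : ℕ | hFun m t = m k * t ^ k}

/-- `Γ̲_m (t) = min {k | m (k+1) / m k ≥ 1 / t}`. -/
def GammaLow (m : ℕ → ℝ) (t : ℝ) : ℕ := sInf {k : ℕ | 1 / t ≤ m (k + 1) / m k}

/-- The set whose supremum is `mg (M, N)`. -/
def mgSet (M N : ℕ → ℝ) : Set ℝ :=
  {x | ∃ j k : ℕ, 1 ≤ j + k ∧ x = (M (j + k) / (N j * N k)) ^ (1 / (j + k : ℝ))}

/-- `mg (M, N) = sup_{j+k ≥ 1} (M (j+k) / (N j * N k)) ^ (1/(j+k))`. -/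
def mg (M N : ℕ → ℝ) : ℝ := sSup (mgSet M N)

/-- `mg (M, N) < ∞`. -/
def MgFinite (M N : ℕ → ℝ) : Prop := BddAbove (mgSet M N)

/-- A weight sequence is regular: `m k ^ (1/k) → ∞`, derivation closed, and
`Γ̄_m (C t) ≤ Γ̲_m t` for some `C ≥ 1`. -/
def RegularWS (M : ℕ → ℝ) : Prop :=
  RootTendsToInfty (mseq M) ∧ DerivClosed M ∧
    ∃ C : ℝ, 1 ≤ C ∧ ∀ t : ℝ, 0 < t → GammaBar (mseq M) (C * t) ≤ GammaLow (mseq M) t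

/-- `f` is of class `E^{M}` (Roumieu) on the open set `U`. -/
def RoumieuOn {E : Type*} [NormedAddCommGroup E] [NormedSpace ℝ E]
    (M : ℕ → ℝ) (f : E → ℂ) (U : Set E) : Prop :=
  ContDiffOn ℝ (⊤ : ℕ∞) f U ∧
    ∀ V : Set E, IsOpen V → IsCompact (closure V) → closure V ⊆ U →
      ∃ C σ : ℝ, 0 < C ∧ 0 < σ ∧
        ∀ x ∈ V, ∀ k : ℕ, ‖iteratedFDerivWithin ℝ k f U x‖ ≤ C * σ ^ k * M k

/-- `f` is of class `E^{(M)}` (Beurling) on the open set `U`. -/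
def BeurlingOn {E : Type*} [NormedAddCommGroup E] [NormedSpace ℝ E]
    (M : ℕ → ℝ) (f : E → ℂ) (U : Set E) : Prop :=
  ContDiffOn ℝ (⊤ : ℕ∞) f U ∧
    ∀ V : Set E, IsOpen V → IsCompact (closure V) → closure V ⊆ U →
      ∀ σ : ℝ, 0 < σ → ∃ C : ℝ, 0 < C ∧
        ∀ x ∈ V, ∀ k : ℕ, ‖iteratedFDerivWithin ℝ k f U x‖ ≤ C * σ ^ k * M k

/-- A weight matrix: a nonempty, pointwise totally ordered family of weight sequences. -/
def IsWeightMatrix (W : Set (ℕ → ℝ)) : Prop :=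
  W.Nonempty ∧ (∀ M ∈ W, IsWeightSeq M) ∧
    ∀ M ∈ W, ∀ N ∈ W, (∀ k, M k ≤ N k) ∨ (∀ k, N k ≤ M k)

/-- R-regularity of a weight matrix. -/
def RRegular (W : Set (ℕ → ℝ)) : Prop :=
  (∀ M ∈ W, RootTendsToInfty (mseq M)) ∧
    (∀ M ∈ W, ∃ N ∈ W, ∃ C : ℝ, 1 ≤ C ∧ ∀ j : ℕ, M (j + 1) ≤ C ^ (j + 1) * N j) ∧
    (∀ M ∈ W, ∃ N ∈ W, ∃ C : ℝ, 1 ≤ C ∧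
      ∀ t : ℝ, 0 < t → GammaBar (mseq N) (C * t) ≤ GammaLow (mseq M) t)

/-- B-regularity of a weight matrix. -/
def BRegular (W : Set (ℕ → ℝ)) : Prop :=
  (∀ M ∈ W, RootTendsToInfty (mseq M)) ∧
    (∀ M ∈ W, ∃ N ∈ W, ∃ C : ℝ, 1 ≤ C ∧ ∀ j : ℕ, N (j + 1) ≤ C ^ j * M j) ∧
    (∀ M ∈ W, ∃ N ∈ W, ∃ C : ℝ, 1 ≤ C ∧
      ∀ t : ℝ, 0 < t → GammaBar (mseq M) (C * t) ≤ GammaLow (mseq N) t)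

/-- R-moderate growth of a weight matrix. -/
def RModerateGrowth (W : Set (ℕ → ℝ)) : Prop := ∀ M ∈ W, ∃ N ∈ W, MgFinite M N

/-- B-moderate growth of a weight matrix. -/
def BModerateGrowth (W : Set (ℕ → ℝ)) : Prop := ∀ M ∈ W, ∃ N ∈ W, MgFinite N M

/-- `f` is of class `E^{W}` (Roumieu, weight matrix) on the open set `U`. -/
def MatrixRoumieuOn {E : Type*} [NormedAddCommGroup E] [NormedSpace ℝ E]
    (W : Set (ℕ → ℝ)) (f : E → ℂ) (U : Set E) : Prop :=
  ContDiffOn ℝ (⊤ : ℕ∞) f U ∧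
    ∀ V : Set E, IsOpen V → IsCompact (closure V) → closure V ⊆ U →
      ∃ M ∈ W, ∃ C σ : ℝ, 0 < C ∧ 0 < σ ∧
        ∀ x ∈ V, ∀ k : ℕ, ‖iteratedFDerivWithin ℝ k f U x‖ ≤ C * σ ^ k * M k

/-- `f` is of class `E^{(W)}` (Beurling, weight matrix) on the open set `U`. -/
def MatrixBeurlingOn {E : Type*} [NormedAddCommGroup E] [NormedSpace ℝ E]
    (W : Set (ℕ → ℝ)) (f : E → ℂ) (U : Set E) : Prop :=
  ContDiffOn ℝ (⊤ : ℕ∞) f U ∧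
    ∀ V : Set E, IsOpen V → IsCompact (closure V) → closure V ⊆ U →
      ∀ M ∈ W, ∀ σ : ℝ, 0 < σ → ∃ C : ℝ, 0 < C ∧
        ∀ x ∈ V, ∀ k : ℕ, ‖iteratedFDerivWithin ℝ k f U x‖ ≤ C * σ ^ k * M k

/-- `ω` is a weight function. -/
def IsWeightFunction (ω : ℝ → ℝ) : Prop :=
  ContinuousOn ω (Ici 0) ∧ MonotoneOn ω (Ici 0) ∧ (∀ t ∈ Ici (0 : ℝ), 0 ≤ ω t) ∧
    ((fun t => ω (2 * t)) =O[atTop] ω) ∧ (ω =o[atTop] fun t : ℝ => t) ∧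
    ((fun t => Real.log t) =o[atTop] ω) ∧ ConvexOn ℝ (Ici 0) fun t => ω (Real.exp t)

/-- The Young conjugate `φ*_ω (s) = sup_{t ≥ 0} (s t - ω (e^t))`. -/
def phiStar (ω : ℝ → ℝ) (s : ℝ) : ℝ := sSup ((fun t => s * t - ω (Real.exp t)) '' Ici 0)

/-- Non-quasianalyticity of a weight function. -/
def NonQuasianalyticW (ω : ℝ → ℝ) : Prop := IntegrableOn (fun t => ω t / t ^ 2) (Ici 1)

/-- `f` is of class `E^{ω}` (Roumieu) on the open set `U`. -/
def OmegaRoumieuOn {E : Type*} [NormedAddCommGroup E] [NormedSpace ℝ E]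
    (ω : ℝ → ℝ) (f : E → ℂ) (U : Set E) : Prop :=
  ContDiffOn ℝ (⊤ : ℕ∞) f U ∧
    ∀ V : Set E, IsOpen V → IsCompact (closure V) → closure V ⊆ U →
      ∃ C ρ : ℝ, 0 < C ∧ 0 < ρ ∧
        ∀ x ∈ V, ∀ k : ℕ,
          ‖iteratedFDerivWithin ℝ k f U x‖ ≤ C * Real.exp (phiStar ω (ρ * k) / ρ)

/-- `f` is of class `E^{(ω)}` (Beurling) on the open set `U`. -/
def OmegaBeurlingOn {E : Type*} [NormedAddCommGroup E] [NormedSpace ℝ E]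
    (ω : ℝ → ℝ) (f : E → ℂ) (U : Set E) : Prop :=
  ContDiffOn ℝ (⊤ : ℕ∞) f U ∧
    ∀ V : Set E, IsOpen V → IsCompact (closure V) → closure V ⊆ U →
      ∀ ρ : ℝ, 0 < ρ → ∃ C : ℝ, 0 < C ∧
        ∀ x ∈ V, ∀ k : ℕ,
          ‖iteratedFDerivWithin ℝ k f U x‖ ≤ C * Real.exp (phiStar ω (ρ * k) / ρ)

/-- The open ellipse `Ω_ε` with vertices `± cosh ε` and co-vertices `± i sinh ε`. -/
def OmegaE (ε : ℝ) : Set ℂ :=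
  {z : ℂ | (z.re / Real.cosh ε) ^ 2 + (z.im / Real.sinh ε) ^ 2 < 1}

/-- The sequence space `Λ^{M}`. -/
def Lambda (M : ℕ → ℝ) : Set (ℕ → ℂ) :=
  {c | ∃ ρ : ℝ, 0 < ρ ∧ ∃ C : ℝ, ∀ k, ‖c k‖ ≤ C * ρ ^ k * M k}

/-- `L(M)`: all non-quasianalytic weight sequences `N ≥ M` with `n = N/k!` log-convex. -/
def LM (M : ℕ → ℝ) : Set (ℕ → ℝ) :=
  {N | IsWeightSeq N ∧ NonQuasianalytic N ∧ (∀ k, M k ≤ N k) ∧ LogConvexSeq (mseq N)}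

/-- A quasianalytic weight sequence `M` is intersectable if `Λ^{M} = ⋂_{N ∈ L(M)} Λ^{N}`. -/
def Intersectable (M : ℕ → ℝ) : Prop := Lambda M = ⋂ N ∈ LM M, Lambda N

/-! The bound `m (j + k) ≤ C ^ (j + k) * n j * n k` says that the term of index `j + k` defining
`h_m t` is at most the product of the terms of indices `j` and `k` defining `h_n (C t)`. Taking the
infimum over `k` gives the first inequality; taking it over `j` as well gives
`h_m t ≤ h_n (C t) ^ 2`, and `C t ≤ e C t / 2` since `2 ≤ e`. -/

section AssociatedFunction

variable {a b : ℕ → ℝ} {C s t : ℝ}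

theorem hFun_nonneg (ha : ∀ k, 0 ≤ a k) (ht : 0 ≤ t) : 0 ≤ hFun a t :=
  Real.iInf_nonneg fun k => mul_nonneg (ha k) (pow_nonneg ht k)

theorem hFun_le_mul_pow (ha : ∀ k, 0 ≤ a k) (ht : 0 ≤ t) (k : ℕ) : hFun a t ≤ a k * t ^ k :=
  ciInf_le ⟨0, forall_mem_range.2 fun i => mul_nonneg (ha i) (pow_nonneg ht i)⟩ k

theorem hFun_mono (ha : ∀ k, 0 ≤ a k) (hs : 0 ≤ s) (hst : s ≤ t) : hFun a s ≤ hFun a t :=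
  le_ciInf fun k => (hFun_le_mul_pow ha hs k).trans
    (mul_le_mul_of_nonneg_left (pow_le_pow_left₀ hs hst k) (ha k))

theorem hFun_le_mul_hFun (ha : ∀ k, 0 ≤ a k) (hb : ∀ k, 0 ≤ b k) (hC : 0 ≤ C)
    (hab : ∀ j k, a (j + k) ≤ C ^ (j + k) * (b j * b k)) (ht : 0 ≤ t) (j : ℕ) :
    hFun a t ≤ C ^ j * b j * t ^ j * hFun b (C * t) := by
  have hcoeff : 0 ≤ C ^ j * b j * t ^ j :=
    mul_nonneg (mul_nonneg (pow_nonneg hC j) (hb j)) (pow_nonneg ht j)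
  rw [hFun.eq_1 b, Real.mul_iInf_of_nonneg hcoeff]
  refine le_ciInf fun k => ?_
  calc hFun a t ≤ a (j + k) * t ^ (j + k) := hFun_le_mul_pow ha ht (j + k)
    _ ≤ C ^ (j + k) * (b j * b k) * t ^ (j + k) :=
        mul_le_mul_of_nonneg_right (hab j k) (pow_nonneg ht _)
    _ = C ^ j * b j * t ^ j * (b k * (C * t) ^ k) := by ring

theorem hFun_le_hFun_sq (ha : ∀ k, 0 ≤ a k) (hb : ∀ k, 0 ≤ b k) (hC : 0 ≤ C)
    (hab : ∀ j k, a (j + k) ≤ C ^ (j + k) * (b j * b k)) (ht : 0 ≤ t) :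
    hFun a t ≤ hFun b (C * t) ^ 2 := by
  have hsq : hFun b (C * t) ^ 2 = ⨅ j, b j * (C * t) ^ j * hFun b (C * t) := by
    rw [sq, ← Real.iInf_mul_of_nonneg (hFun_nonneg hb (mul_nonneg hC ht))]
    rfl
  rw [hsq]
  refine le_ciInf fun j => (hFun_le_mul_hFun ha hb hC hab ht j).trans_eq ?_
  ring

theorem hFun_mul_sq_le_hFun_exp_one_mul_div_two_sq (ha : ∀ k, 0 ≤ a k) (hC : 0 ≤ C)
    (ht : 0 ≤ t) : hFun a (C * t) ^ 2 ≤ hFun a (Real.exp 1 * C * t / 2) ^ 2 := by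
  have hCt : 0 ≤ C * t := mul_nonneg hC ht
  have htwo : 2 ≤ Real.exp 1 := by linarith [Real.add_one_le_exp (1 : ℝ)]
  have hle : C * t ≤ Real.exp 1 * C * t / 2 := by
    linarith [mul_le_mul_of_nonneg_right htwo hCt]
  exact pow_le_pow_left₀ (hFun_nonneg ha hCt) (hFun_mono ha hCt hle) 2

end AssociatedFunction

section ModerateGrowthConstant

variable {M N : ℕ → ℝ}

theorem IsWeightSeq.nonneg (hM : IsWeightSeq M) (k : ℕ) : 0 ≤ M k :=
  (hM.2.1 k).le

theorem mseq_nonneg (hM : ∀ k, 0 ≤ M k) (k : ℕ) : 0 ≤ mseq M k :=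
  div_nonneg (hM k) (Nat.cast_nonneg _)

theorem mg_nonneg (hM : ∀ k, 0 ≤ M k) (hN : ∀ k, 0 ≤ N k) : 0 ≤ mg M N := by
  apply Real.sSup_nonneg
  rintro _ ⟨j, k, -, rfl⟩
  exact Real.rpow_nonneg (div_nonneg (hM _) (mul_nonneg (hN j) (hN k))) _

theorem add_le_mg_pow_mul (hM : ∀ k, 0 ≤ M k) (hN : ∀ k, 0 < N k) (h0 : M 0 ≤ N 0 * N 0)
    (hfin : MgFinite M N) (j k : ℕ) : M (j + k) ≤ mg M N ^ (j + k) * (N j * N k) := by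
  have hNN : 0 < N j * N k := mul_pos (hN j) (hN k)
  have hquot : 0 ≤ M (j + k) / (N j * N k) := div_nonneg (hM _) hNN.le
  rcases Nat.eq_zero_or_pos (j + k) with hjk | hjk
  · obtain ⟨rfl, rfl⟩ : j = 0 ∧ k = 0 := Nat.add_eq_zero_iff.1 hjk
    simpa only [add_zero, pow_zero, one_mul] using h0
  · have hroot : (M (j + k) / (N j * N k)) ^ ((j + k : ℕ) : ℝ)⁻¹ ≤ mg M N :=
      le_csSup hfin ⟨j, k, hjk, by rw [one_div, Nat.cast_add]⟩
    rw [← div_le_iff₀ hNN]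
    calc M (j + k) / (N j * N k)
        = ((M (j + k) / (N j * N k)) ^ ((j + k : ℕ) : ℝ)⁻¹) ^ (j + k) :=
          (Real.rpow_inv_natCast_pow hquot hjk.ne').symm
      _ ≤ mg M N ^ (j + k) := pow_le_pow_left₀ (Real.rpow_nonneg hquot _) hroot _

theorem mseq_add_le {C : ℝ} {j k : ℕ} (hM : 0 ≤ M (j + k))
    (h : M (j + k) ≤ C ^ (j + k) * (N j * N k)) :
    mseq M (j + k) ≤ C ^ (j + k) * (mseq N j * mseq N k) := by
  have hfactorial : (j.factorial * k.factorial : ℝ) ≤ (j + k).factorial := by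
    exact_mod_cast Nat.le_of_dvd (Nat.factorial_pos _)
      (Nat.factorial_mul_factorial_dvd_factorial_add j k)
  calc mseq M (j + k) ≤ M (j + k) / (j.factorial * k.factorial) :=
        div_le_div_of_nonneg_left hM (by positivity) hfactorial
    _ ≤ C ^ (j + k) * (N j * N k) / (j.factorial * k.factorial) := by gcongr
    _ = C ^ (j + k) * (mseq N j * mseq N k) := by
        rw [mseq, mseq, div_mul_div_comm, mul_div_assoc]

end ModerateGrowthConstant

theorem statement11_general {M N : ℕ → ℝ} (hM : ∀ k, 0 ≤ M k) (hN : ∀ k, 0 < N k)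
    (h0 : M 0 ≤ N 0 * N 0) (hfin : MgFinite M N) {t : ℝ} (ht : 0 ≤ t) :
    (∀ j : ℕ,
      hFun (mseq M) t ≤ mg M N ^ j * mseq N j * t ^ j * hFun (mseq N) (mg M N * t)) ∧
    hFun (mseq M) t ≤ hFun (mseq N) (mg M N * t) ^ 2 := by
  have hN_nonneg (k : ℕ) : 0 ≤ N k := (hN k).le
  have hmn (j k : ℕ) : mseq M (j + k) ≤ mg M N ^ (j + k) * (mseq N j * mseq N k) :=
    mseq_add_le (hM _) (add_le_mg_pow_mul hM hN h0 hfin j k)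
  exact ⟨hFun_le_mul_hFun (mseq_nonneg hM) (mseq_nonneg hN_nonneg) (mg_nonneg hM hN_nonneg) hmn ht,
    hFun_le_hFun_sq (mseq_nonneg hM) (mseq_nonneg hN_nonneg) (mg_nonneg hM hN_nonneg) hmn ht⟩

/-- if `C = mg (M, N) < ∞` then `h_m (t) ≤ C^j n_j t^j h_n (C t)` and
`h_m (t) ≤ h_n (e C t / 2) ^ 2` for all `t > 0`. -/
theorem statement11 (M N : ℕ → ℝ) (hM : IsWeightSeq M) (hN : IsWeightSeq N)
    (hm : RootTendsToInfty (mseq M)) (hn : RootTendsToInfty (mseq N))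
    (hfin : MgFinite M N) :
    (∀ t : ℝ, 0 < t → ∀ j : ℕ,
      hFun (mseq M) t ≤ mg M N ^ j * mseq N j * t ^ j * hFun (mseq N) (mg M N * t)) ∧
    (∀ t : ℝ, 0 < t →
      hFun (mseq M) t ≤ hFun (mseq N) (Real.exp 1 * mg M N * t / 2) ^ 2) := by
  have h0 : M 0 ≤ N 0 * N 0 := by rw [hM.1, hN.1, one_mul]
  have hgen (t : ℝ) (ht : 0 < t) := statement11_general hM.nonneg hN.2.1 h0 hfin ht.le
  exact ⟨fun t ht => (hgen t ht).1, fun t ht => (hgen t ht).2.trans <|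
    hFun_mul_sq_le_hFun_exp_one_mul_div_two_sq (mseq_nonneg hN.nonneg)
      (mg_nonneg hM.nonneg hN.nonneg) ht.le⟩
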